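/- Let P ∈ 𝒫(Z) be a local maximizer of Q ↦ B(Q,ℰ) on 𝒫(Z) with u := P − Π_P ≠ 0. Then for every Q ∈ 𝒫(Z) with B(Q,ℰ) ≤ B(P,ℰ) one has B_u(Q) ≤ B_u(P); in particular, P is a local maximizer of Q ↦ B_u(Q) on 𝒫(Z). -/

import Mathlib

/-!
The inequality is the chain `B_u(Q) ≤ B(Q,ℰ) ≤ B(P,ℰ) = H(P) - H(Π_P) ≤ B_u(P)`. For `θ` fixed,
`B(Q, P_θ) = H(Q) - H(P_θ) - ⟨θ, μ(Q) - μ(P_θ)⟩` depends on `Q` only through `H(Q)` and `μ(Q)`, and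
it is nonnegative by convexity. Moving `Q` along `u = P - Π_P` does not change `μ(Q)`, which gives
the first inequality, and the last one holds because `Π_P` lies on the line through `P` in the
direction `u`. The identity `B(P,ℰ) = H(P) - H(Π_P)` is Lagrangian duality: separating the point
`(μ(P), H(Π_P) - ε)` from the convex set of all `(μ(Q), t)` with `t ≥ H(Q)` yields a multiplier `θ`
for which `B(P, P_θ) < H(P) - H(Π_P) + ε`. Here `Π_P` may lie on the boundary of
`𝒫(Z)`, outside `ℰ`.
-/

open Set Matrix

section Convexity

theorem convexOn_Ici_of_convexOn_Ioi {g : ℝ → ℝ} {a : ℝ} (hcont : ContinuousOn g (Ici a))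
    (hconv : ConvexOn ℝ (Ioi a) g) (hdiff : ∀ x ∈ Ioi a, DifferentiableAt ℝ g x) :
    ConvexOn ℝ (Ici a) g := by
  apply MonotoneOn.convexOn_of_deriv (convex_Ici a) hcont <;> rw [interior_Ici]
  · exact fun x hx => (hdiff x hx).differentiableWithinAt
  · exact hconv.monotoneOn_deriv hdiff

theorem tangent_le_of_convexOn {s : Set ℝ} {g : ℝ → ℝ} {g' a x : ℝ} (hg : ConvexOn ℝ s g)
    (ha : a ∈ s) (hx : x ∈ s) (hderiv : HasDerivAt g g' a) : g a + g' * (x - a) ≤ g x := by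
  rcases lt_trichotomy x a with hxa | rfl | hax
  · have hslope := hg.slope_le_of_hasDerivAt hx ha hxa hderiv
    rw [slope_def_field, div_le_iff₀ (sub_pos.2 hxa)] at hslope
    linarith
  · simp
  · have hslope := hg.le_slope_of_hasDerivAt ha hx hax hderiv
    rw [slope_def_field, le_div_iff₀ (sub_pos.2 hax)] at hslope
    linarith

end Convexity

section Duality

open scoped Pointwise

/-- The set of pairs `(L x, t)` with `x ∈ s` and `t ≥ h x`. It projects the epigraph of `h` along
`L`, and it is the epigraph of the value function `y ↦ inf {h x | x ∈ s, L x = y}` whenever these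
infima are attained. -/
def valueEpigraph {X E : Type*} (s : Set X) (h : X → ℝ) (L : X → E) : Set (E × ℝ) :=
  {q | ∃ x ∈ s, L x = q.1 ∧ h x ≤ q.2}

theorem convex_valueEpigraph {X E : Type*} [AddCommGroup X] [Module ℝ X] [AddCommGroup E]
    [Module ℝ E] {s : Set X} {h : X → ℝ} (hh : ConvexOn ℝ s h) (L : X →ₗ[ℝ] E) :
    Convex ℝ (valueEpigraph s h L) := by
  have himage : valueEpigraph s h L =
      L.prodMap LinearMap.id '' {q : X × ℝ | q.1 ∈ s ∧ h q.1 ≤ q.2} := by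
    ext ⟨y, t⟩
    constructor
    · rintro ⟨x, hx, rfl, hxt⟩
      exact ⟨(x, t), ⟨hx, hxt⟩, rfl⟩
    · rintro ⟨⟨x, t⟩, ⟨hx, hxt⟩, ⟨⟩⟩
      exact ⟨x, hx, rfl, hxt⟩
  rw [himage]
  exact hh.convex_epigraph.linear_image _

theorem isClosed_valueEpigraph {X E : Type*} [TopologicalSpace X] [AddGroup E]
    [TopologicalSpace E] [IsTopologicalAddGroup E] [T1Space E] {s : Set X} {h : X → ℝ} {L : X → E}
    (hs : IsCompact s) (hh : ContinuousOn h s) (hL : ContinuousOn L s) :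
    IsClosed (valueEpigraph s h L) := by
  have hsum : valueEpigraph s h L =
      (fun x => (L x, h x)) '' s + ({0} : Set E) ×ˢ Ici (0 : ℝ) := by
    ext ⟨y, t⟩
    constructor
    · rintro ⟨x, hx, rfl, hxt⟩
      exact ⟨_, mem_image_of_mem _ hx, (0, t - h x), ⟨rfl, sub_nonneg.2 hxt⟩, by simp⟩
    · rintro ⟨_, ⟨x, hx, rfl⟩, ⟨_, r⟩, ⟨rfl, hr⟩, ⟨⟩⟩
      exact ⟨x, hx, (add_zero _).symm, le_add_of_nonneg_right hr⟩
  rw [hsum]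
  exact (isClosed_singleton.prod isClosed_Ici).add_left_of_isCompact
    (hs.image_of_continuousOn (hL.prodMk hh))

variable {X : Type*} [AddCommGroup X] [Module ℝ X] [TopologicalSpace X] {s : Set X} {h : X → ℝ}

theorem exists_dual_forall_lt_add {E : Type*} [AddCommGroup E] [Module ℝ E]
    [TopologicalSpace E] [IsTopologicalAddGroup E] [T1Space E] [ContinuousSMul ℝ E]
    [LocallyConvexSpace ℝ E] (hs : IsCompact s) (hconv : ConvexOn ℝ s h) (hcont : ContinuousOn h s)
    (L : X →L[ℝ] E) {x₀ : X} (hx₀ : x₀ ∈ s) {c : ℝ} (hc : ∀ x ∈ s, L x = L x₀ → c < h x) :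
    ∃ φ : StrongDual ℝ E, ∀ x ∈ s, c < h x + φ (L x - L x₀) := by
  have hnot_mem : (L x₀, c) ∉ valueEpigraph s h L := fun ⟨x, hx, hLx, hhx⟩ =>
    (hc x hx hLx).not_ge hhx
  obtain ⟨ψ, _, hψlt, hltψ⟩ := geometric_hahn_banach_point_closed
    (convex_valueEpigraph hconv L.toLinearMap)
    (isClosed_valueEpigraph hs hcont L.continuous.continuousOn) hnot_mem
  have hψ (y : E) (t : ℝ) : ψ (y, t) = ψ (y, 0) + t * ψ (0, 1) := by
    rw [← smul_eq_mul, ← map_smul, ← map_add]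
    simp
  have hsep : ∀ x ∈ s, ψ (L x₀, 0) + c * ψ (0, 1) < ψ (L x, 0) + h x * ψ (0, 1) := by
    intro x hx
    rw [← hψ, ← hψ]
    exact hψlt.trans (hltψ _ ⟨x, hx, rfl, le_rfl⟩)
  -- `(L x₀, h x₀)` lies directly above the separated point, so the hyperplane is not vertical.
  have hpos : 0 < ψ (0, 1) := by
    have hx₀sep := hsep x₀ hx₀
    have hcx₀ := hc x₀ hx₀ rfl
    by_contra! hnonpos
    nlinarith
  refine ⟨(ψ (0, 1))⁻¹ • ψ.comp (.inl ℝ E ℝ), fun x hx => ?_⟩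
  have hxsep := hsep x hx
  simp only [map_sub, _root_.smul_apply, ContinuousLinearMap.comp_apply,
    ContinuousLinearMap.inl_apply, smul_eq_mul]
  field_simp
  linarith

theorem exists_dotProduct_forall_lt_add {ι : Type*} [Fintype ι] (hs : IsCompact s)
    (hconv : ConvexOn ℝ s h) (hcont : ContinuousOn h s) (L : X →L[ℝ] (ι → ℝ)) {x₀ : X}
    (hx₀ : x₀ ∈ s) {c : ℝ} (hc : ∀ x ∈ s, L x = L x₀ → c < h x) :
    ∃ θ : ι → ℝ, ∀ x ∈ s, c < h x + θ ⬝ᵥ (L x - L x₀) := by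
  classical
  obtain ⟨φ, hφ⟩ := exists_dual_forall_lt_add hs hconv hcont L hx₀ hc
  obtain ⟨θ, hθ⟩ := (dotProductEquiv ℝ ι).surjective φ.toLinearMap
  refine ⟨θ, fun x hx => ?_⟩
  have hθφ : θ ⬝ᵥ (L x - L x₀) = φ (L x - L x₀) := LinearMap.congr_fun hθ _
  exact hθφ ▸ hφ x hx

end Duality

section BregmanFamily

variable {Z ι : Type*} [Fintype Z]

/-- The convex function `H(Q) = ∑ z, β_z(Q(z))`. -/
def potential (β : Z → ℝ → ℝ) (Q : Z → ℝ) : ℝ :=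
  ∑ z, β z (Q z)

/-- The Bregman divergence `B(P,Q)`, where `β' z` stands for the derivative of `β z`. -/
def bregmanDiv (β β' : Z → ℝ → ℝ) (P Q : Z → ℝ) : ℝ :=
  ∑ z, (β z (P z) - β z (Q z) - β' z (Q z) * (P z - Q z))

/-- The divergence `B(P,ℰ)` from the family of measures `p θ`; the infimum has the junk value `0`
if the divergences are unbounded below. -/
noncomputable def familyDiv (β β' : Z → ℝ → ℝ) (p : (ι → ℝ) → Z → ℝ) (P : Z → ℝ) : ℝ :=
  ⨅ θ, bregmanDiv β β' P (p θ)

/-- `p` parametrizes a Bregman family with sufficient statistic `f`, encoded as the matrix whose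
rows are the values `f z`, so that `Q ᵥ* f` is `μ(Q)` and `(f *ᵥ θ) z` is `⟨θ, f z⟩`. The equation
`p θ z = e_z(⟨θ, f z⟩ - Λ θ)` is written in terms of the derivatives `β' z` instead of their
inverses `e_z`. -/
structure IsBregmanFamily [Fintype ι] (β' : Z → ℝ → ℝ) (f : Matrix Z ι ℝ)
    (p : (ι → ℝ) → Z → ℝ) : Prop where
  pos : ∀ θ z, 0 < p θ z
  sum_eq_one : ∀ θ, ∑ z, p θ z = 1
  exists_deriv_eq : ∀ θ, ∃ r, ∀ z, β' z (p θ z) = (f *ᵥ θ) z - r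

/-- The probability measures with the same expectation of the statistic `f` as `Q`. -/
def momentFiber (f : Matrix Z ι ℝ) (Q : Z → ℝ) : Set (Z → ℝ) :=
  {R ∈ stdSimplex ℝ Z | R ᵥ* f = Q ᵥ* f}

/-- The probability measures on the line through `Q` in the direction `u`. -/
def lineFiber (u Q : Z → ℝ) : Set (Z → ℝ) :=
  {R ∈ stdSimplex ℝ Z | ∃ t : ℝ, R - Q = t • u}

/-- `R` minimizes the potential over `S`: for `S = momentFiber f P` this is `R = Π_P`, and for
`S = lineFiber u Q` it is `R = Π_u(Q)`. -/
def IsPotentialProjection (β : Z → ℝ → ℝ) (S : Set (Z → ℝ)) (R : Z → ℝ) : Prop :=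
  R ∈ S ∧ IsMinOn (potential β) S R

theorem lineFiber_subset_momentFiber {f : Matrix Z ι ℝ} {u : Z → ℝ} (hu : u ᵥ* f = 0)
    (Q : Z → ℝ) : lineFiber u Q ⊆ momentFiber f Q := by
  rintro R ⟨hR, t, ht⟩
  refine ⟨hR, sub_eq_zero.1 ?_⟩
  rw [← sub_vecMul, ht, smul_vecMul, hu, smul_zero]

section Potential

variable {β β' : Z → ℝ → ℝ}

theorem continuousOn_potential (hcont : ∀ z, ContinuousOn (β z) (Ici 0)) :
    ContinuousOn (potential β) (stdSimplex ℝ Z) :=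
  continuousOn_finsetSum _ fun z _ =>
    (hcont z).comp (continuous_apply z).continuousOn fun _ hQ => hQ.1 z

theorem convexOn_potential (hconv : ∀ z, ConvexOn ℝ (Ici 0) (β z)) :
    ConvexOn ℝ (stdSimplex ℝ Z) (potential β) := by
  refine ⟨convex_stdSimplex ℝ Z, fun P hP Q hQ a b ha hb hab => ?_⟩
  simp only [potential, Finset.smul_sum, ← Finset.sum_add_distrib]
  exact Finset.sum_le_sum fun z _ => (hconv z).2 (hP.1 z) (hQ.1 z) ha hb hab

theorem bregmanDiv_nonneg (hconv : ∀ z, ConvexOn ℝ (Ici 0) (β z))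
    (hderiv : ∀ z x, 0 < x → HasDerivAt (β z) (β' z x) x) {P Q : Z → ℝ}
    (hP : ∀ z, 0 ≤ P z) (hQ : ∀ z, 0 < Q z) : 0 ≤ bregmanDiv β β' P Q := by
  refine Finset.sum_nonneg fun z _ => ?_
  linarith [tangent_le_of_convexOn (hconv z) (hQ z).le (hP z) (hderiv z _ (hQ z))]

end Potential

namespace IsBregmanFamily

variable [Fintype ι] {β β' : Z → ℝ → ℝ} {f : Matrix Z ι ℝ} {p : (ι → ℝ) → Z → ℝ}

theorem mem_stdSimplex (hp : IsBregmanFamily β' f p) (θ : ι → ℝ) : p θ ∈ stdSimplex ℝ Z :=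
  ⟨fun z => (hp.pos θ z).le, hp.sum_eq_one θ⟩

theorem bregmanDiv_eq (hp : IsBregmanFamily β' f p) {Q : Z → ℝ} (hQ : ∑ z, Q z = 1) (θ : ι → ℝ) :
    bregmanDiv β β' Q (p θ) =
      potential β Q - potential β (p θ) - θ ⬝ᵥ (Q ᵥ* f - p θ ᵥ* f) := by
  obtain ⟨r, hr⟩ := hp.exists_deriv_eq θ
  have hlinear : ∑ z, β' z (p θ z) * (Q z - p θ z) = θ ⬝ᵥ (Q ᵥ* f - p θ ᵥ* f) := calc
    _ = (f *ᵥ θ) ⬝ᵥ (Q - p θ) - r * (∑ z, Q z - ∑ z, p θ z) := by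
      simp only [hr, sub_mul, Finset.sum_sub_distrib, ← Finset.mul_sum]
      rfl
    _ = (f *ᵥ θ) ⬝ᵥ (Q - p θ) := by rw [hQ, hp.sum_eq_one, sub_self, mul_zero, sub_zero]
    _ = θ ⬝ᵥ (Q ᵥ* f - p θ ᵥ* f) := by
      rw [dotProduct_comm, dotProduct_mulVec, sub_vecMul, dotProduct_comm]
  simp only [bregmanDiv, potential, Finset.sum_sub_distrib, hlinear]

theorem potential_sub_le_familyDiv (hp : IsBregmanFamily β' f p)
    (hconv : ∀ z, ConvexOn ℝ (Ici 0) (β z))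
    (hderiv : ∀ z x, 0 < x → HasDerivAt (β z) (β' z x) x) {Q R : Z → ℝ}
    (hQ : Q ∈ stdSimplex ℝ Z) (hR : R ∈ momentFiber f Q) :
    potential β Q - potential β R ≤ familyDiv β β' p Q := by
  refine le_ciInf fun θ => ?_
  have hnonneg := bregmanDiv_nonneg hconv hderiv hR.1.1 (hp.pos θ)
  rw [hp.bregmanDiv_eq hR.1.2, hR.2] at hnonneg
  rw [hp.bregmanDiv_eq hQ.2]
  linarith

theorem exists_bregmanDiv_lt (hp : IsBregmanFamily β' f p)
    (hcont : ∀ z, ContinuousOn (β z) (Ici 0)) (hconv : ∀ z, ConvexOn ℝ (Ici 0) (β z))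
    {P : Z → ℝ} (hP : P ∈ stdSimplex ℝ Z) {c : ℝ} (hc : ∀ R ∈ momentFiber f P, c < potential β R) :
    ∃ θ, bregmanDiv β β' P (p θ) < potential β P - c := by
  obtain ⟨θ, hθ⟩ := exists_dotProduct_forall_lt_add (isCompact_stdSimplex ℝ Z)
    (convexOn_potential hconv) (continuousOn_potential hcont)
    f.vecMulLinear.toContinuousLinearMap hP fun R hR hRP => hc R ⟨hR, hRP⟩
  have hlt : c < potential β (p (-θ)) + θ ⬝ᵥ (p (-θ) ᵥ* f - P ᵥ* f) := hθ _ (hp.mem_stdSimplex _)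
  refine ⟨-θ, ?_⟩
  rw [hp.bregmanDiv_eq hP.2, neg_dotProduct, ← dotProduct_neg, neg_sub]
  linarith

theorem familyDiv_eq (hp : IsBregmanFamily β' f p)
    (hcont : ∀ z, ContinuousOn (β z) (Ici 0)) (hconv : ∀ z, ConvexOn ℝ (Ici 0) (β z))
    (hderiv : ∀ z x, 0 < x → HasDerivAt (β z) (β' z x) x) {P R : Z → ℝ}
    (hP : P ∈ stdSimplex ℝ Z) (hR : IsPotentialProjection β (momentFiber f P) R) :
    familyDiv β β' p P = potential β P - potential β R := by
  refine le_antisymm (le_of_forall_pos_lt_add fun ε hε => ?_)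
    (hp.potential_sub_le_familyDiv hconv hderiv hP hR.1)
  obtain ⟨θ, hθ⟩ := hp.exists_bregmanDiv_lt (c := potential β R - ε) hcont hconv hP
    fun S hS => (sub_lt_self _ hε).trans_le (hR.2 hS)
  have hbdd : BddBelow (range fun θ => bregmanDiv β β' P (p θ)) :=
    ⟨0, forall_mem_range.2 fun θ => bregmanDiv_nonneg hconv hderiv hP.1 (hp.pos θ)⟩
  have hle : familyDiv β β' p P ≤ bregmanDiv β β' P (p θ) := ciInf_le hbdd θ
  linarith

end IsBregmanFamily

theorem stmt_18_general [Fintype ι] {β β' : Z → ℝ → ℝ} {f : Matrix Z ι ℝ}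
    {p : (ι → ℝ) → Z → ℝ} (hp : IsBregmanFamily β' f p)
    (hcont : ∀ z, ContinuousOn (β z) (Ici 0)) (hconv : ∀ z, ConvexOn ℝ (Ici 0) (β z))
    (hderiv : ∀ z x, 0 < x → HasDerivAt (β z) (β' z x) x)
    {P R : Z → ℝ} (hP : P ∈ stdSimplex ℝ Z) (hR : IsPotentialProjection β (momentFiber f P) R)
    {proj : (Z → ℝ) → Z → ℝ}
    (hproj : ∀ Q ∈ stdSimplex ℝ Z, IsPotentialProjection β (lineFiber (P - R) Q) (proj Q)) :
    (∀ Q ∈ stdSimplex ℝ Z, familyDiv β β' p Q ≤ familyDiv β β' p P →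
      potential β Q - potential β (proj Q) ≤ potential β P - potential β (proj P)) ∧
    (IsLocalMaxOn (familyDiv β β' p) (stdSimplex ℝ Z) P →
      IsLocalMaxOn (fun Q => potential β Q - potential β (proj Q)) (stdSimplex ℝ Z) P) := by
  have hmoment : (P - R) ᵥ* f = 0 := by rw [sub_vecMul, hR.1.2, sub_self]
  have hRline : R ∈ lineFiber (P - R) P := ⟨hR.1.1, -1, by simp⟩
  have hle : ∀ Q ∈ stdSimplex ℝ Z, familyDiv β β' p Q ≤ familyDiv β β' p P →
      potential β Q - potential β (proj Q) ≤ potential β P - potential β (proj P) := by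
    intro Q hQ hQP
    calc
      potential β Q - potential β (proj Q) ≤ familyDiv β β' p Q :=
        hp.potential_sub_le_familyDiv hconv hderiv hQ
          (lineFiber_subset_momentFiber hmoment Q (hproj Q hQ).1)
      _ ≤ familyDiv β β' p P := hQP
      _ = potential β P - potential β R := hp.familyDiv_eq hcont hconv hderiv hP hR
      _ ≤ potential β P - potential β (proj P) := sub_le_sub_left ((hproj P hP).2 hRline) _
  refine ⟨hle, fun hmax => ?_⟩
  filter_upwards [hmax, self_mem_nhdsWithin] with Q hQP hQ using hle Q hQ hQP

end BregmanFamily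

theorem stmt_18 {Z : Type} [Fintype Z] [Nonempty Z] {d : ℕ}
    (β β' : Z → ℝ → ℝ)
    (hβc : ∀ z, ContinuousOn (β z) (Set.Ici 0))
    (hβsc : ∀ z, StrictConvexOn ℝ (Set.Ioi 0) (β z))
    (hβd : ∀ z x, 0 < x → HasDerivAt (β z) (β' z x) x)
    (hβ'bot : ∀ z, Filter.Tendsto (β' z) (nhdsWithin 0 (Set.Ioi 0)) Filter.atBot)
    (hβ'top : ∀ z, Filter.Tendsto (β' z) Filter.atTop Filter.atTop)
    (e : Z → ℝ → ℝ)
    (he_pos : ∀ z r, 0 < e z r)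
    (he_left : ∀ z r, β' z (e z r) = r)
    (he_right : ∀ z x, 0 < x → e z (β' z x) = x)
    (f : Z → Fin d → ℝ)
    (prob : Set (Z → ℝ))
    (hprob : prob = {P : Z → ℝ | (∀ z, 0 ≤ P z) ∧ (∑ z, P z) = 1})
    (μ : (Z → ℝ) → Fin d → ℝ)
    (hμ : ∀ P i, μ P i = ∑ z, P z * f z i)
    (H : (Z → ℝ) → ℝ)
    (hH : ∀ Q, H Q = ∑ z, β z (Q z))
    (Λ : (Fin d → ℝ) → ℝ)
    (hΛ : ∀ θ, (∑ z, e z ((∑ i, θ i * f z i) - Λ θ)) = 1)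
    (Pθ : (Fin d → ℝ) → Z → ℝ)
    (hPθ : ∀ θ z, Pθ θ z = e z ((∑ i, θ i * f z i) - Λ θ))
    (Bdiv : (Z → ℝ) → (Z → ℝ) → ℝ)
    (hBdiv : ∀ P Q, Bdiv P Q = ∑ z, (β z (P z) - β z (Q z) - β' z (Q z) * (P z - Q z)))
    (BE : (Z → ℝ) → ℝ)
    (hBE : ∀ P, BE P = ⨅ θ, Bdiv P (Pθ θ))
    (Pr : (Z → ℝ) → Z → ℝ)
    (hPr : ∀ P ∈ prob, Pr P ∈ prob ∧ μ (Pr P) = μ P ∧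
      (∀ Q ∈ prob, μ Q = μ P → H (Pr P) ≤ H Q) ∧
      (∀ Q ∈ prob, μ Q = μ P → H Q = H (Pr P) → Q = Pr P))
    (Pru : (Z → ℝ) → (Z → ℝ) → Z → ℝ)
    (hPru : ∀ u : Z → ℝ, (∑ z, u z) = 0 → u ≠ 0 → ∀ Q ∈ prob,
      Pru u Q ∈ prob ∧ (∃ t : ℝ, ∀ z, Pru u Q z - Q z = t * u z) ∧
      (∀ R ∈ prob, (∃ t : ℝ, ∀ z, R z - Q z = t * u z) → H (Pru u Q) ≤ H R) ∧
      (∀ R ∈ prob, (∃ t : ℝ, ∀ z, R z - Q z = t * u z) → H R = H (Pru u Q) → R = Pru u Q))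
    (Pplus : (Z → ℝ) → Set (Z → ℝ))
    (hPplus : ∀ u, Pplus u = {Q | Q ∈ prob ∧ 0 < ∑ z, (Q z - Pru u Q z) * u z})
    (Bu : (Z → ℝ) → (Z → ℝ) → ℝ)
    (hBu : ∀ u Q, Bu u Q = H Q - H (Pru u Q))
    (Bbar : (Z → ℝ) → ℝ)
    (hBbar : ∀ u, Bbar u = sSup (Bu u '' closure (Pplus u)))
    (P : Z → ℝ) (hP : P ∈ prob)
    (hmax : IsLocalMaxOn BE prob P)
    (hne : P - Pr P ≠ 0) :
    (∀ Q ∈ prob, BE Q ≤ BE P → Bu (P - Pr P) Q ≤ Bu (P - Pr P) P) ∧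
    IsLocalMaxOn (Bu (P - Pr P)) prob P := by
  obtain rfl : prob = stdSimplex ℝ Z := hprob
  obtain rfl : μ = fun Q => Q ᵥ* of f := funext₂ hμ
  obtain rfl : H = potential β := funext hH
  obtain rfl : Bdiv = bregmanDiv β β' := funext₂ hBdiv
  obtain rfl : BE = familyDiv β β' Pθ := funext hBE
  obtain rfl : Bu = fun u Q => potential β Q - potential β (Pru u Q) := funext₂ hBu
  have hfamily : IsBregmanFamily β' (of f) Pθ := {
    pos θ z := hPθ θ z ▸ he_pos z _
    sum_eq_one θ := by simpa only [hPθ] using hΛ θ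
    exists_deriv_eq θ := ⟨Λ θ, fun z => by rw [hPθ, he_left, mulVec, dotProduct_comm]; rfl⟩ }
  have hconv z : ConvexOn ℝ (Ici 0) (β z) :=
    convexOn_Ici_of_convexOn_Ioi (hβc z) (hβsc z).convexOn fun x hx => (hβd z x hx).differentiableAt
  obtain ⟨hPr_mem, hPr_moment, hPr_min, -⟩ := hPr P hP
  have hPr_proj : IsPotentialProjection β (momentFiber (of f) P) (Pr P) :=
    ⟨⟨hPr_mem, hPr_moment⟩, fun Q hQ => hPr_min Q hQ.1 hQ.2⟩
  have hsum : ∑ z, (P - Pr P) z = 0 := by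
    simp only [Pi.sub_apply, Finset.sum_sub_distrib, hP.2, hPr_mem.2, sub_self]
  have hPru_proj Q (hQ : Q ∈ stdSimplex ℝ Z) :
      IsPotentialProjection β (lineFiber (P - Pr P) Q) (Pru (P - Pr P) Q) := by
    obtain ⟨hmem, ⟨t, ht⟩, hmin, -⟩ := hPru _ hsum hne Q hQ
    exact ⟨⟨hmem, t, funext ht⟩, fun R ⟨hR, t, ht⟩ => hmin R hR ⟨t, congrFun ht⟩⟩
  exact (stmt_18_general hfamily hβc hconv hβd hP hPr_proj hPru_proj).imp_right (· hmax)
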